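/- The element ∑_{0≤i≤3, 0≤j≤2} T_{ij} ⊗ T^{ij} of R ⊗_ℚ R, where T^{ij} := T_{3−i,2−j} − T_{4−i,1−j} + T_{5−i,−j} (with T_{pq} = 0 for p > 3 or q < 0), has the reproducing property of the diagonal class: for every x ∈ R, ∑_{0≤i≤3, 0≤j≤2} ⟨x, T_{ij}⟩ · T^{ij} = x. -/

import Mathlib

/-!
The relations of `R` give `H⁴ = a⁴ = 0` and `a²H³ = a³H²` (the other terms of `a²H³` carry `a⁴`).
Hence `∫ aᵐHⁿ` for `n ≤ 4` is `1` when `(m, n)` is `(3, 2)` or `(2, 3)` and `0` otherwise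
(`Int_T_eq`). By linearity it suffices to take `x = T k l` with `k ≤ 3`, `l ≤ 2`; then only
`(i, j) = (3 - k, 2 - l)` and, if `k ≤ 2` and `1 ≤ l`, `(i, j) = (2 - k, 3 - l)` contribute, and the
correction terms of the dual classes telescope to `T k l`.
-/

open MvPolynomial

noncomputable section

/-- The polynomial ring `ℚ[a, H]` in two variables. -/
abbrev P : Type := MvPolynomial (Fin 2) ℚ

/-- The variable `a` (hyperplane class of the Grassmannian). -/
def aP : P := X 0

/-- The variable `H` (pullback of the hyperplane class of `ℙ³`). -/
def HP : P := X 1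

/-- The ideal `(a⁴, H³ − aH² + a²H − a³)`. -/
def J : Ideal P := Ideal.span {aP ^ 4, HP ^ 3 - aP * HP ^ 2 + aP ^ 2 * HP - aP ^ 3}

/-- The cohomology ring `R = ℚ[a,H]/(a⁴, H³ − aH² + a²H − a³)`. -/
abbrev R : Type := P ⧸ J

/-- `T i j` is the image of `aⁱHʲ` in `R`. -/
def T (i j : ℕ) : R := Ideal.Quotient.mk J (aP ^ i * HP ^ j)

/-- `Tz p q` is the image of `aᵖHᑫ` in `R` for integer exponents, with the
convention that it is `0` whenever `p > 3` or `q < 0`. -/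
def Tz (p q : ℤ) : R :=
  if 3 < p ∨ q < 0 then 0 else Ideal.Quotient.mk J (aP ^ p.toNat * HP ^ q.toNat)

/-- `Tdual i j = T_{3−i,2−j} − T_{4−i,1−j} + T_{5−i,−j}` (with the convention
`T_{pq} = 0` for `p > 3` or `q < 0`). -/
def Tdual (i j : ℕ) : R :=
  Tz (3 - (i : ℤ)) (2 - (j : ℤ)) - Tz (4 - (i : ℤ)) (1 - (j : ℤ))
    + Tz (5 - (i : ℤ)) (-(j : ℤ))

lemma T_mul (i j k l : ℕ) : T i j * T k l = T (i + k) (j + l) := by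
  simp only [T, ← map_mul]
  congr 1
  ring

lemma T_eq_zero {m : ℕ} (hm : 4 ≤ m) (n : ℕ) : T m n = 0 := by
  refine Ideal.Quotient.eq_zero_iff_mem.2 ?_
  obtain ⟨d, rfl⟩ := Nat.exists_eq_add_of_le hm
  have h : aP ^ 4 ∈ J := Ideal.subset_span (by simp)
  convert J.mul_mem_left (aP ^ d * HP ^ n) h using 1
  ring

/-- The cubic relation, multiplied by `aᵐHⁿ`. -/
lemma T_cubic (m n : ℕ) :
    T m (n + 3) = T (m + 1) (n + 2) - T (m + 2) (n + 1) + T (m + 3) n := by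
  simp only [T, ← map_sub, ← map_add]
  refine Ideal.Quotient.eq.2 ?_
  have h : HP ^ 3 - aP * HP ^ 2 + aP ^ 2 * HP - aP ^ 3 ∈ J := Ideal.subset_span (by simp)
  convert J.mul_mem_left (aP ^ m * HP ^ n) h using 1
  ring

lemma T_four (m : ℕ) : T m 4 = 0 := by
  have h1 := T_cubic m 1
  have h2 := T_cubic (m + 1) 0
  have h3 := T_eq_zero (m := m + 4) (by omega) 0
  simp only [Nat.reduceAdd, Nat.add_assoc, zero_add] at h1 h2
  rw [h1, h2, h3]
  ring

/-- The integrals of all monomials occurring in products of two basis elements. -/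
lemma Int_T_eq (Int : R →ₗ[ℚ] ℚ)
    (hInt : ∀ i j, i ≤ 3 → j ≤ 2 → Int (T i j) = if i = 3 ∧ j = 2 then 1 else 0)
    (m n : ℕ) (hn : n ≤ 4) :
    Int (T m n) = if (m = 3 ∧ n = 2) ∨ (m = 2 ∧ n = 3) then 1 else 0 := by
  have key : ∀ m n, n ≤ 2 → Int (T m n) = if m = 3 ∧ n = 2 then 1 else 0 := by
    intro m n hn
    by_cases hm : m ≤ 3
    · exact hInt m n hm hn
    · rw [T_eq_zero (by omega), map_zero, if_neg (by omega)]
  obtain h | rfl | rfl : n ≤ 2 ∨ n = 3 ∨ n = 4 := by omega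
  · rw [key m n h]
    congr 1
    simp only [eq_iff_iff]
    omega
  · rw [T_cubic m 0, map_add, map_sub, key _ _ (by omega), key _ _ (by omega), key _ _ (by omega)]
    simp
  · rw [T_four]
    simp

/-- **Reproducing property of the diagonal class
`∑_{i,j} T_{ij} ⊗ T^{ij} ∈ R ⊗ R`:** for every `x ∈ R`,
`∑_{0 ≤ i ≤ 3, 0 ≤ j ≤ 2} ⟨x, T i j⟩ • Tdual i j = x`, where
`⟨x, y⟩ = Int (x * y)` is the Poincaré pairing. -/
theorem diagonal_class_reproduces
    (hli : LinearIndependent ℚ (fun p : Fin 4 × Fin 3 => T p.1.val p.2.val))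
    (hsp : Submodule.span ℚ (Set.range fun p : Fin 4 × Fin 3 => T p.1.val p.2.val) = ⊤)
    (Int : R →ₗ[ℚ] ℚ)
    (hInt : ∀ i j, i ≤ 3 → j ≤ 2 →
      Int (T i j) = if i = 3 ∧ j = 2 then 1 else 0) :
    ∀ x : R,
      (∑ i ∈ Finset.range 4, ∑ j ∈ Finset.range 3, Int (x * T i j) • Tdual i j) = x := by
  -- Both sides are linear in `x`, so it is enough to check the spanning set.
  intro x
  have hx : x ∈ Submodule.span ℚ (Set.range fun p : Fin 4 × Fin 3 => T p.1.val p.2.val) :=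
    hsp ▸ Submodule.mem_top
  induction hx using Submodule.span_induction with
  | zero => simp
  | add x y _ _ hx hy =>
    simp only [add_mul, map_add, add_smul, Finset.sum_add_distrib, hx, hy]
  | smul c x _ hx =>
    simp only [smul_mul_assoc, map_smul, smul_eq_mul, mul_smul, ← Finset.smul_sum, hx]
  | mem x hx =>
    obtain ⟨⟨k, l⟩, rfl⟩ := hx
    have hval : ∀ i ∈ Finset.range 4, ∀ j ∈ Finset.range 3,
        Int (T k.val l.val * T i j) • Tdual i j =
          (if (k.val + i = 3 ∧ l.val + j = 2) ∨ (k.val + i = 2 ∧ l.val + j = 3)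
            then (1 : ℚ) else 0) • Tdual i j := by
      intro i _ j hj
      have := Finset.mem_range.1 hj
      rw [T_mul, Int_T_eq Int hInt _ _ (by omega)]
    refine (Finset.sum_congr rfl fun i hi => Finset.sum_congr rfl (hval i hi)).trans ?_
    fin_cases k <;> fin_cases l <;>
      simp [Finset.sum_range_succ, Tdual, Tz, T]

end
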